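/- For all d, n, k ≥ 1, RFA(ℤ^d,n,k) ∩ LP(ℤ^d,n,k) = SP(ℤ^d,n,k), and RFA(ℤ^d,n,k) ∩ OB(ℤ^d,n,k) = ⟨SP(ℤ^d,n,k), Shift(ℤ^d,n,k)⟩. -/

import Mathlib

open Function

/-- `ℤ^d`. -/
abbrev V (d : ℕ) : Type := Fin d → ℤ

/-- A head configuration is valid if it carries at most one head. -/
def headOk {d k : ℕ} (y : V d → Option (Fin k)) : Prop :=
  ∀ u v : V d, (y u).isSome → (y v).isSome → u = v

/-- The space `X_{n,k}`: a tape in `Σ^{ℤ^d}` together with at most one head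
carrying a state in `Q = Fin k`. -/
abbrev X (d n k : ℕ) : Type :=
  { c : (V d → Fin n) × (V d → Option (Fin k)) // headOk c.2 }

/-- `DefinedBy F F' f T` : `T` is the moving-head Turing machine defined by the
local rule `f`, reading the tape on the window `F`, writing on the window `F'`,
changing the state and moving the head. -/
def DefinedBy {d n k : ℕ} (F F' : Finset (V d))
    (f : (V d → Fin n) → Fin k → (V d → Fin n) × Fin k × V d)
    (T : X d n k → X d n k) : Prop :=
  -- `f` only depends on the restriction of the tape to `F`, and only the
  -- restriction of its tape output to `F'` matters:
  (∀ x x' q, (∀ v ∈ F, x v = x' v) →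
      (∀ v ∈ F', (f x q).1 v = (f x' q).1 v) ∧ (f x q).2 = (f x' q).2) ∧
  -- a configuration with no head is fixed:
  (∀ c : X d n k, (∀ v, c.val.2 v = none) → T c = c) ∧
  -- if the head is at `v` in state `q`, apply the local rule there:
  (∀ (c : X d n k) (v : V d) (q : Fin k), c.val.2 v = some q →
    (∀ t, (T c).val.1 t =
      if t - v ∈ F' then (f (fun u => c.val.1 (u + v)) q).1 (t - v) else c.val.1 t) ∧
    (∀ t, (T c).val.2 t =
      if t = v + (f (fun u => c.val.1 (u + v)) q).2.2
      then some (f (fun u => c.val.1 (u + v)) q).2.1 else none))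

/-- A moving-head `(d,n,k)`-Turing machine. -/
def IsTM {d n k : ℕ} (T : X d n k → X d n k) : Prop :=
  ∃ F F' f, DefinedBy F F' f T

/-- A reversible moving-head Turing machine: a Turing machine admitting a
Turing machine inverse. -/
def IsRTM {d n k : ℕ} (T : X d n k → X d n k) : Prop :=
  IsTM T ∧ ∃ S : X d n k → X d n k, IsTM S ∧ S ∘ T = id ∧ T ∘ S = id

/-- The set of reversible Turing machines, viewed as permutations of `X_{n,k}`. -/
def RTMset (d n k : ℕ) : Set (Equiv.Perm (X d n k)) :=
  {π | IsTM (⇑π) ∧ IsTM (⇑π.symm)}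

/-- The group `RTM(ℤ^d,n,k)` of reversible Turing machines (a subgroup of the
permutation group of `X_{n,k}`; the set of reversible Turing machines is closed
under composition and inversion, so it coincides with the subgroup it generates). -/
def RTMgrp (d n k : ℕ) : Subgroup (Equiv.Perm (X d n k)) :=
  Subgroup.closure (RTMset d n k)

/-- Local permutations: reversible Turing machines that never move the head. -/
def LPset (d n k : ℕ) : Set (Equiv.Perm (X d n k)) :=
  {π | π ∈ RTMset d n k ∧
    ∀ (c : X d n k) (v : V d), ((π c).val.2 v).isSome = (c.val.2 v).isSome}

/-- The group `LP(ℤ^d,n,k)` of local permutations. -/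
def LPgrp (d n k : ℕ) : Subgroup (Equiv.Perm (X d n k)) :=
  Subgroup.closure (LPset d n k)

/-- Reversible finite-state automata: reversible Turing machines that never
change the tape. -/
def RFAset (d n k : ℕ) : Set (Equiv.Perm (X d n k)) :=
  {π | π ∈ RTMset d n k ∧ ∀ c : X d n k, (π c).val.1 = c.val.1}

/-- The group `RFA(ℤ^d,n,k)` of reversible finite-state automata. -/
def RFAgrp (d n k : ℕ) : Subgroup (Equiv.Perm (X d n k)) :=
  Subgroup.closure (RFAset d n k)

/-- State-permutations: reversible machines that never move the head and never
change the tape, only permuting the state as a function of the tape. -/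
def SPset (d n k : ℕ) : Set (Equiv.Perm (X d n k)) :=
  {π | π ∈ RTMset d n k ∧ (∀ c : X d n k, (π c).val.1 = c.val.1) ∧
    ∀ (c : X d n k) (v : V d), ((π c).val.2 v).isSome = (c.val.2 v).isSome}

/-- The group `SP(ℤ^d,n,k)` of state-permutations. -/
def SPgrp (d n k : ℕ) : Subgroup (Equiv.Perm (X d n k)) :=
  Subgroup.closure (SPset d n k)

/-- The machines `T_u` that move the head by `u ∈ ℤ^d` without changing the
tape or the state. -/
def Shiftset (d n k : ℕ) : Set (Equiv.Perm (X d n k)) :=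
  {π | ∃ u : V d, ∀ c : X d n k,
    (π c).val.1 = c.val.1 ∧ ∀ t, (π c).val.2 t = c.val.2 (t - u)}

/-- The group `Shift(ℤ^d,n,k)`. -/
def Shiftgrp (d n k : ℕ) : Subgroup (Equiv.Perm (X d n k)) :=
  Subgroup.closure (Shiftset d n k)

/-- The group `OB(ℤ^d,n,k) = ⟨Shift(ℤ^d,n,k), LP(ℤ^d,n,k)⟩` of oblivious Turing
machines. -/
def OBgrp (d n k : ℕ) : Subgroup (Equiv.Perm (X d n k)) :=
  Subgroup.closure (Shiftset d n k ∪ LPset d n k)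

/-- The group `EL(ℤ^d,n,k) = ⟨RFA(ℤ^d,n,k), LP(ℤ^d,n,k)⟩` of elementary Turing
machines. -/
def ELgrp (d n k : ℕ) : Subgroup (Equiv.Perm (X d n k)) :=
  Subgroup.closure (RFAset d n k ∪ LPset d n k)

lemma apply_inv_self' {α : Type} (π : Equiv.Perm α) (c : α) : π (π⁻¹ c) = c :=
  Equiv.apply_symm_apply π c

lemma tm_id {d n k : ℕ} : IsTM (id : X d n k → X d n k) := by
  refine ⟨∅, ∅, fun x q => (x, q, 0), ?_, fun _ _ => rfl, ?_⟩
  · intro x x' q _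
    simp
  · intro c v q h
    refine ⟨fun t => by simp, fun t => ?_⟩
    by_cases ht : t = v
    · subst ht; simp [h]
    · have : c.val.2 t = none := by
        by_contra h0
        exact ht (c.2 t v (Option.isSome_iff_ne_none.2 h0) (by simp [h]))
      simp [ht, this]

lemma disp_finite {d n k : ℕ} (hn : 1 ≤ n) (F F' : Finset (V d))
    (f : (V d → Fin n) → Fin k → (V d → Fin n) × Fin k × V d)
    (h : ∀ x x' q, (∀ v ∈ F, x v = x' v) →
      (∀ v ∈ F', (f x q).1 v = (f x' q).1 v) ∧ (f x q).2 = (f x' q).2) :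
    ∃ U : Finset (V d), ∀ x q, (f x q).2.2 ∈ U := by
  classical
  let e : (F → Fin n) → (V d → Fin n) := fun p v => if hv : v ∈ F then p ⟨v, hv⟩ else ⟨0, hn⟩
  refine ⟨(Finset.univ : Finset ((F → Fin n) × Fin k)).image (fun p => (f (e p.1) p.2).2.2), ?_⟩
  intro x q
  refine Finset.mem_image.2 ⟨(fun v => x v, q), Finset.mem_univ _, ?_⟩
  rw [(h (e fun v => x v) x q ?_).2]
  intro v hv
  simp [e, hv]

lemma tm_comp {d n k : ℕ} (hn : 1 ≤ n) {S T : X d n k → X d n k} (hS : IsTM S) (hT : IsTM T) :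
    IsTM (S ∘ T) := by
  classical
  obtain ⟨F, F', f, hf1, hf2, hf3⟩ := hT
  obtain ⟨G, G', g, hg1, hg2, hg3⟩ := hS
  obtain ⟨U, hU⟩ := disp_finite hn F F' f hf1
  let y : (V d → Fin n) → Fin k → V d → Fin n := fun x q t =>
    if t ∈ F' then (f x q).1 t else x t
  let b : (V d → Fin n) → Fin k → (V d → Fin n) × Fin k × V d := fun x q =>
    g (fun s => y x q (s + (f x q).2.2)) (f x q).2.1
  let H' : Finset (V d) := F' ∪ (G' ×ˢ U).image (fun p => p.1 + p.2)
  let H : Finset (V d) := F ∪ H' ∪ (G ×ˢ U).image (fun p => p.1 + p.2)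
  refine ⟨H, H', fun x q => (fun t => if t - (f x q).2.2 ∈ G' then (b x q).1 (t - (f x q).2.2)
    else y x q t, (b x q).2.1, (f x q).2.2 + (b x q).2.2), ?_, ?_, ?_⟩
  · intro x x' q hx
    obtain ⟨h1, h2⟩ := hf1 x x' q (fun v hv => hx v (by simp [H, hv]))
    have hy : ∀ t ∈ H, y x q t = y x' q t := by
      intro t ht
      by_cases h : t ∈ F'
      · simp [y, h, h1 t h]
      · simp [y, h, hx t ht]
    have hb := hg1 (fun s => y x q (s + (f x q).2.2)) (fun s => y x' q (s + (f x q).2.2))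
      (f x q).2.1 (fun v hv => hy _ (by
        refine Finset.mem_union_right _ (Finset.mem_image.2 ⟨(v, (f x q).2.2), ?_, rfl⟩)
        exact Finset.mem_product.2 ⟨hv, hU x q⟩))
    have hbx' : b x' q = g (fun s => y x' q (s + (f x q).2.2)) (f x q).2.1 := by
      simp only [b, h2]
    refine ⟨fun t ht => ?_, ?_⟩
    · dsimp only
      rw [hbx', ← h2]
      split_ifs with hh
      · exact hb.1 _ hh
      · exact hy t (Finset.mem_union_left _ (Finset.mem_union_right _ ht))
    · dsimp only
      rw [hbx', ← h2, ← hb.2]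
  · intro c hc
    simp only [comp_apply, hf2 c hc, hg2 c hc]
  · intro c v q hc
    obtain ⟨h1, h2⟩ := hf3 c v q hc
    set x : V d → Fin n := fun u => c.val.1 (u + v) with hxdef
    obtain ⟨k1, k2⟩ := hg3 (T c) (v + (f x q).2.2) (f x q).2.1 (by rw [h2]; simp)
    have hy : ∀ t, (T c).val.1 t = y x q (t - v) := by
      intro t
      rw [h1]
      simp [y, hxdef]
    have hb : g (fun u => (T c).val.1 (u + (v + (f x q).2.2))) (f x q).2.1 = b x q := by
      simp only [b]
      congr 1
      funext u
      rw [hy]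
      congr 1
      abel
    rw [hb] at k1 k2
    refine ⟨fun t => ?_, fun t => ?_⟩
    · rw [comp_apply, k1, hy, ← sub_sub]
      dsimp only
      by_cases hG : t - v - (f x q).2.2 ∈ G'
      · have : t - v ∈ H' := by
          refine Finset.mem_union_right _ (Finset.mem_image.2
            ⟨(t - v - (f x q).2.2, (f x q).2.2), ?_, by simp⟩)
          exact Finset.mem_product.2 ⟨hG, hU x q⟩
        simp [hG, this]
      · by_cases hH : t - v ∈ H'
        · simp [hG, hH]
        · have : t - v ∉ F' := fun h => hH (Finset.mem_union_left _ h)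
          simp only [hG, hH, y, this, if_false]
          simp [hxdef]
    · rw [comp_apply, k2, add_assoc]

def RTMsub (d n k : ℕ) (hn : 1 ≤ n) : Subgroup (Equiv.Perm (X d n k)) where
  carrier := RTMset d n k
  one_mem' := ⟨tm_id, tm_id⟩
  mul_mem' := fun {a b} ha hb => ⟨tm_comp (S := a) (T := b) hn ha.1 hb.1,
    tm_comp (S := b.symm) (T := a.symm) hn hb.2 ha.2⟩
  inv_mem' := fun {a} ha => ⟨ha.2, ha.1⟩

def TPsub (d n k : ℕ) : Subgroup (Equiv.Perm (X d n k)) where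
  carrier := {π | ∀ c : X d n k, (π c).val.1 = c.val.1}
  one_mem' := fun _ => rfl
  mul_mem' := fun {a b} ha hb c => (ha (b c)).trans (hb c)
  inv_mem' := fun {a} ha c => by
    have := ha (a⁻¹ c)
    rw [apply_inv_self'] at this
    exact this.symm

def Mv {d n k : ℕ} (u : V d) (π : Equiv.Perm (X d n k)) : Prop :=
  ∀ (c : X d n k) (v : V d), ((π c).val.2 v).isSome = (c.val.2 (v - u)).isSome

lemma Mv.mul {d n k : ℕ} {u w : V d} {a b : Equiv.Perm (X d n k)} (ha : Mv u a) (hb : Mv w b) :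
    Mv (u + w) (a * b) := fun c v => by
  rw [Equiv.Perm.mul_apply, ha, hb, sub_sub]

lemma Mv.inv {d n k : ℕ} {u : V d} {a : Equiv.Perm (X d n k)} (ha : Mv u a) :
    Mv (-u) a⁻¹ := fun c v => by
  have := ha (a⁻¹ c) (v + u)
  rw [apply_inv_self'] at this
  simpa using this.symm

lemma mv_one {d n k : ℕ} : Mv 0 (1 : Equiv.Perm (X d n k)) := fun c v => by simp

lemma mv_lp {d n k : ℕ} {π : Equiv.Perm (X d n k)} (h : π ∈ LPset d n k) : Mv 0 π :=
  fun c v => by rw [h.2, sub_zero]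

lemma lp_mv {d n k : ℕ} {π : Equiv.Perm (X d n k)} (h : π ∈ LPgrp d n k) : Mv 0 π := by
  induction h using Subgroup.closure_induction with
  | mem x hx => exact mv_lp hx
  | one => exact mv_one
  | mul a b _ _ ha hb => simpa using ha.mul hb
  | inv a _ ha => simpa using ha.inv

lemma ob_mv {d n k : ℕ} {π : Equiv.Perm (X d n k)} (h : π ∈ OBgrp d n k) : ∃ u, Mv u π := by
  induction h using Subgroup.closure_induction with
  | mem x hx =>
    rcases hx with ⟨u, hu⟩ | hx
    · exact ⟨u, fun c v => by rw [(hu c).2]⟩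
    · exact ⟨0, mv_lp hx⟩
  | one => exact ⟨0, mv_one⟩
  | mul a b _ _ ha hb =>
    obtain ⟨u, hu⟩ := ha
    obtain ⟨w, hw⟩ := hb
    exact ⟨_, hu.mul hw⟩
  | inv a _ ha =>
    obtain ⟨u, hu⟩ := ha
    exact ⟨_, hu.inv⟩

lemma shift_tm {d n k : ℕ} {π : Equiv.Perm (X d n k)} (h : π ∈ Shiftset d n k) : IsTM π := by
  obtain ⟨u, hu⟩ := h
  refine ⟨∅, ∅, fun x q => (x, q, u), ?_, ?_, ?_⟩
  · intro x x' q _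
    simp
  · intro c hc
    apply Subtype.ext
    refine Prod.ext (hu c).1 (funext fun t => ?_)
    rw [(hu c).2, hc, hc]
  · intro c v q hq
    refine ⟨fun t => by simp [(hu c).1], fun t => ?_⟩
    rw [(hu c).2]
    by_cases ht : t = v + u
    · subst ht; simp [hq]
    · have : c.val.2 (t - u) = none := by
        by_contra h0
        exact ht (sub_eq_iff_eq_add.1 (c.2 (t - u) v (Option.isSome_iff_ne_none.2 h0) (by simp [hq])))
      simp [ht, this]

lemma shift_inv {d n k : ℕ} {π : Equiv.Perm (X d n k)} (h : π ∈ Shiftset d n k) :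
    π⁻¹ ∈ Shiftset d n k := by
  obtain ⟨u, hu⟩ := h
  refine ⟨-u, fun c => ?_⟩
  have := hu (π⁻¹ c)
  rw [apply_inv_self'] at this
  exact ⟨this.1.symm, fun t => by rw [this.2]; simp⟩

lemma shift_rfa {d n k : ℕ} {π : Equiv.Perm (X d n k)} (h : π ∈ Shiftset d n k) :
    π ∈ RFAset d n k := by
  refine ⟨⟨shift_tm h, shift_tm (shift_inv h)⟩, ?_⟩
  obtain ⟨u, hu⟩ := h
  exact fun c => (hu c).1

def shiftFun {d n k : ℕ} (u : V d) (c : X d n k) : X d n k :=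
  ⟨(c.val.1, fun t => c.val.2 (t - u)), fun a b ha hb => sub_left_injective (c.2 _ _ ha hb)⟩

def shiftPerm (d n k : ℕ) (u : V d) : Equiv.Perm (X d n k) where
  toFun := shiftFun u
  invFun := shiftFun (-u)
  left_inv := fun c => by simp [shiftFun]
  right_inv := fun c => by simp [shiftFun]

lemma shiftPerm_mem (d n k : ℕ) (u : V d) : shiftPerm d n k u ∈ Shiftset d n k :=
  ⟨u, fun _ => ⟨rfl, fun _ => rfl⟩⟩

lemma rfa_mem {d n k : ℕ} (hn : 1 ≤ n) {π : Equiv.Perm (X d n k)} (h : π ∈ RFAgrp d n k) :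
    π ∈ RFAset d n k := by
  have : RFAgrp d n k ≤ RTMsub d n k hn ⊓ TPsub d n k :=
    (Subgroup.closure_le _).2 fun a ha => ⟨ha.1, ha.2⟩
  exact ⟨(this h).1, (this h).2⟩

lemma sp_of {d n k : ℕ} {π : Equiv.Perm (X d n k)} (h : π ∈ RFAset d n k) (h0 : Mv 0 π) :
    π ∈ SPgrp d n k :=
  Subgroup.subset_closure ⟨h.1, h.2, fun c v => by rw [h0, sub_zero]⟩

lemma sp_le_rfa (d n k : ℕ) : SPgrp d n k ≤ RFAgrp d n k :=
  Subgroup.closure_mono fun _ h => ⟨h.1, h.2.1⟩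

lemma sp_le_lp (d n k : ℕ) : SPgrp d n k ≤ LPgrp d n k :=
  Subgroup.closure_mono fun _ h => ⟨h.1, h.2.2⟩

/-- `RFA ∩ LP = SP` and `RFA ∩ OB = ⟨SP, Shift⟩`. -/
theorem rfa_inter_lp_and_ob (d n k : ℕ) (hd : 1 ≤ d) (hn : 1 ≤ n) (hk : 1 ≤ k) :
    RFAgrp d n k ⊓ LPgrp d n k = SPgrp d n k ∧
    RFAgrp d n k ⊓ OBgrp d n k = SPgrp d n k ⊔ Shiftgrp d n k := by
  refine ⟨le_antisymm ?_ (le_inf (sp_le_rfa d n k) (sp_le_lp d n k)), le_antisymm ?_ ?_⟩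
  · rintro π ⟨h1, h2⟩
    exact sp_of (rfa_mem hn h1) (lp_mv h2)
  · rintro π ⟨h1, h2⟩
    obtain ⟨u, hu⟩ := ob_mv h2
    have hs := shiftPerm_mem d n k (-u)
    have hm : Mv (-u) (shiftPerm d n k (-u)) := fun c v => rfl
    have h3 : shiftPerm d n k (-u) * π ∈ RFAgrp d n k :=
      mul_mem (Subgroup.subset_closure (shift_rfa hs)) h1
    have h4 : shiftPerm d n k (-u) * π ∈ SPgrp d n k :=
      sp_of (rfa_mem hn h3) (by simpa using hm.mul hu)
    have h5 : shiftPerm d n k (-u) ∈ SPgrp d n k ⊔ Shiftgrp d n k :=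
      (le_sup_right : Shiftgrp d n k ≤ _) (Subgroup.subset_closure hs)
    have h6 := mul_mem (inv_mem h5) ((le_sup_left : SPgrp d n k ≤ SPgrp d n k ⊔ Shiftgrp d n k) h4)
    simpa using h6
  · refine sup_le (le_inf (sp_le_rfa d n k) ((sp_le_lp d n k).trans ?_)) (le_inf ?_ ?_)
    · exact Subgroup.closure_mono Set.subset_union_right
    · exact Subgroup.closure_mono fun _ h => shift_rfa h
    · exact Subgroup.closure_mono Set.subset_union_left
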